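/- Let K = C_{(13,2)}(4₁) be the (13,2)-cable of the figure-eight knot, with normalized colored Jones polynomial J_{K,n} defined via Habiro's formula and the cabling formula (with r = 13, s = 2). For every integer n ≥ 1, the function ℏ ↦ J_{K,n}(e^{ℏ}) (defined for small real ℏ ≠ 0 by the quotient J̃_{K,n}(e^{ℏ/4})/J̃_{U,n}(e^{ℏ/4}) and extended real-analytically across ℏ = 0) has Taylor expansion at ℏ = 0 equal to J_{K,n}(e^{ℏ}) = 1 + (17 − 17n²)ℏ² + (−156 + 156n²)ℏ³ + (24749/12 − 2365n² + (3631/12)n⁴)ℏ⁴ + (−31629 + 38662n² − 7033n⁴)ℏ⁵ + (203413517/360 − (8687953/12)n² + (1969367/12)n⁴ − (1855937/360)n⁶)ℏ⁶ + O(ℏ⁷). In particular, the coefficient of ℏ and every ℏ-coefficient up to order 6 is a polynomial in n of degree at most the order of ℏ. -/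

import Mathlib

/-- Habiro's formula for the normalized colored Jones polynomial of the figure-eight knot:
`J_{4₁,m}(q) = Σ_{k=0}^{|m|−1} Π_{j=1}^{k} (q^m + q^{−m} − q^j − q^{−j})`. -/
noncomputable def J41 (q : ℝ) (m : ℤ) : ℝ :=
  ∑ k ∈ Finset.range m.natAbs, ∏ j ∈ Finset.Icc 1 k,
    (q ^ m + q ^ (-m) - q ^ (j : ℤ) - q ^ (-(j : ℤ)))

/-- The unnormalized colored Jones polynomial of the figure-eight knot (with `t⁴ = q`):
`J̃_{4₁,m}(t) = ((t^{2m} − t^{−2m})/(t² − t^{−2})) · J_{4₁,m}(t⁴)`. -/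
noncomputable def Jtilde41 (t : ℝ) (m : ℤ) : ℝ :=
  (t ^ (2 * m) - t ^ (-(2 * m))) / (t ^ (2 : ℤ) - t ^ (-2 : ℤ)) * J41 (t ^ (4 : ℤ)) m

/-- The 0-framed unknot normalization `J̃_{U,n}(t) = (t^{2n} − t^{−2n})/(t² − t^{−2})`. -/
noncomputable def JtildeU (t : ℝ) (n : ℤ) : ℝ :=
  (t ^ (2 * n) - t ^ (-(2 * n))) / (t ^ (2 : ℤ) - t ^ (-2 : ℤ))

/-- The cabling formula for the unnormalized colored Jones polynomial of the
`(r,s)`-cable of the figure-eight knot: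
`J̃_{K,n}(t) = t^{−rs(n²−1)} Σ_w t^{4rw(sw+1)} J̃_{4₁,2sw+1}(t)`, where `w` runs over
`{−(n−1)/2, −(n−1)/2 + 1, …, (n−1)/2}`.  Writing `u = 2w = 2j − (n−1)` for `j = 0, …, n−1`,
the exponent is `4rw(sw+1) = rsu² + 2ru` and the color is `2sw + 1 = su + 1`. -/
noncomputable def JtildeCable (r s : ℤ) (t : ℝ) (n : ℤ) : ℝ :=
  t ^ (-(r * s * (n ^ 2 - 1))) *
    ∑ j ∈ Finset.range n.toNat,
      t ^ (r * s * (2 * (j : ℤ) - (n - 1)) ^ 2 + 2 * r * (2 * (j : ℤ) - (n - 1))) *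
        Jtilde41 t (s * (2 * (j : ℤ) - (n - 1)) + 1)

/-- The normalized colored Jones polynomial of the `(r,s)`-cable of the figure-eight knot,
evaluated at `q = e^ℏ` (that is, `t = e^{ℏ/4}`):
`J_{K,n}(e^ℏ) = J̃_{K,n}(e^{ℏ/4}) / J̃_{U,n}(e^{ℏ/4})`. -/
noncomputable def JCable (r s : ℤ) (n : ℤ) (h : ℝ) : ℝ :=
  JtildeCable r s (Real.exp (h / 4)) n / JtildeU (Real.exp (h / 4)) n

open Asymptotics in
/-- `f` has the Taylor coefficients `a` up to order 7 at `0`. -/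
def Tay (f : ℝ → ℝ) (a : ℕ → ℝ) : Prop :=
  (fun h => f h - ∑ i ∈ Finset.range 8, a i * h ^ i) =O[nhds (0 : ℝ)] (fun h => h ^ 8)

theorem Tay.congr {f g : ℝ → ℝ} {a b : ℕ → ℝ} (hf : Tay f a) (hfg : ∀ h, f h = g h)
    (hab : ∀ k < 8, a k = b k) : Tay g b := by
  have h1 : f = g := funext hfg
  subst h1
  unfold Tay at *
  convert hf using 3 with h
  exact Finset.sum_congr rfl fun k hk => by rw [hab k (Finset.mem_range.1 hk)]

theorem Tay.add {f g : ℝ → ℝ} {a b : ℕ → ℝ} (hf : Tay f a) (hg : Tay g b) :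
    Tay (fun h => f h + g h) (fun k => a k + b k) := by
  unfold Tay at *
  refine (hf.add hg).congr_left fun h => ?_
  simp only [add_mul, Finset.sum_add_distrib]
  ring

theorem Tay.sub {f g : ℝ → ℝ} {a b : ℕ → ℝ} (hf : Tay f a) (hg : Tay g b) :
    Tay (fun h => f h - g h) (fun k => a k - b k) := by
  unfold Tay at *
  refine (hf.sub hg).congr_left fun h => ?_
  simp only [sub_mul, Finset.sum_sub_distrib]
  ring

theorem isBigO_one_of_cont {f : ℝ → ℝ} (hf : Continuous f) :
    f =O[nhds (0 : ℝ)] (fun _ => (1 : ℝ)) :=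
  (hf.tendsto 0).isBigO_one ℝ

theorem Tay.isBigO_one {f : ℝ → ℝ} {a : ℕ → ℝ} (hf : Tay f a) :
    f =O[nhds (0 : ℝ)] (fun _ => (1 : ℝ)) := by
  have h1 : (fun h => f h - ∑ i ∈ Finset.range 8, a i * h ^ i) =O[nhds (0 : ℝ)]
      (fun _ => (1 : ℝ)) :=
    Asymptotics.IsBigO.trans hf (isBigO_one_of_cont (by fun_prop))
  have h2 : (fun h : ℝ => ∑ i ∈ Finset.range 8, a i * h ^ i) =O[nhds (0 : ℝ)]
      (fun _ => (1 : ℝ)) := isBigO_one_of_cont (by fun_prop)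
  exact (h1.add h2).congr_left fun h => by ring

theorem Tay.mul {f g : ℝ → ℝ} {a b : ℕ → ℝ} (hf : Tay f a) (hg : Tay g b) :
    Tay (fun h => f h * g h) (fun k => ∑ i ∈ Finset.range (k + 1), a i * b (k - i)) := by
  have e1 := Asymptotics.IsBigO.mul hf hg.isBigO_one
  have e2 := Asymptotics.IsBigO.mul (isBigO_one_of_cont
    (f := fun h : ℝ => ∑ i ∈ Finset.range 8, a i * h ^ i) (by fun_prop)) hg
  have e3 : (fun h : ℝ => h ^ 8 * (∑ k ∈ Finset.range 7, (∑ i ∈ Finset.range (7 - k),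
      a (k + 1 + i) * b (7 - i)) * h ^ k)) =O[nhds (0 : ℝ)] (fun h => h ^ 8 * 1) :=
    (Asymptotics.isBigO_refl _ _).mul (isBigO_one_of_cont (by fun_prop))
  simp only [mul_one, one_mul] at e1 e2 e3
  refine ((e1.add e2).add e3).congr_left fun h => ?_
  simp only [Finset.sum_range_succ, Finset.sum_range_zero, zero_add]
  norm_num only
  ring

theorem tay_exp (c : ℝ) : Tay (fun h => Real.exp (c * h)) (fun k => c ^ k / (k.factorial : ℝ)) := by
  have h1 := Real.exp_sub_sum_range_isBigO_pow 8
  have h2 : Filter.Tendsto (fun h : ℝ => c * h) (nhds 0) (nhds 0) := by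
    have : Continuous (fun h : ℝ => c * h) := by fun_prop
    simpa using this.tendsto 0
  have h3 := h1.comp_tendsto h2
  have h4 : (fun h : ℝ => (c * h) ^ 8) =O[nhds (0 : ℝ)] (fun h => h ^ 8) := by
    simp only [mul_pow]
    exact Asymptotics.isBigO_const_mul_self _ _ _
  refine (Asymptotics.IsBigO.trans h3 h4).congr_left fun h => ?_
  simp only [Function.comp_apply]
  congr 1
  exact Finset.sum_congr rfl fun k _ => by rw [mul_pow]; ring

theorem tay_zero_of_isBigO {f : ℝ → ℝ} (hf : f =O[nhds (0 : ℝ)] (fun h => h ^ 8)) :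
    Tay f (fun _ => 0) := by
  unfold Tay
  simpa using hf

theorem tay_const (c : ℝ) : Tay (fun _ => c) (fun k => if k = 0 then c else 0) := by
  unfold Tay
  have : (fun h : ℝ => c - ∑ i ∈ Finset.range 8, (if i = 0 then c else 0) * h ^ i)
      = fun _ => 0 := by
    funext h
    simp [Finset.sum_range_succ]
  rw [this]
  exact Asymptotics.isBigO_zero _ _

theorem exp_int_mul_aux (k : ℤ) (x : ℝ) : Real.exp (k * x) = Real.exp x ^ k := by
  rw [mul_comm, Real.exp_mul, Real.rpow_intCast]

/-- The `j`-th factor in Habiro's formula. -/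
noncomputable def habX (m : ℤ) (j : ℕ) (h : ℝ) : ℝ :=
  Real.exp h ^ m + Real.exp h ^ (-m) - Real.exp h ^ (j : ℤ) - Real.exp h ^ (-(j : ℤ))

/-- Taylor coefficients of `habX`. -/
noncomputable def habC (m : ℝ) (j : ℝ) : ℕ → ℝ
  | 2 => m ^ 2 - j ^ 2
  | 4 => (m ^ 4 - j ^ 4) / 12
  | 6 => (m ^ 6 - j ^ 6) / 360
  | _ => 0

theorem tay_habX (m : ℤ) (j : ℕ) : Tay (habX m j) (habC m j) := by
  refine ((((tay_exp m).add (tay_exp (-m))).sub (tay_exp j)).sub (tay_exp (-j))).congr ?_ ?_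
  · intro h
    simp only [habX, ← exp_int_mul_aux]
    push_cast
    ring_nf
  · intro k hk
    interval_cases k <;> simp [habC, Nat.factorial] <;> ring

/-- Taylor coefficients of `J41`. -/
noncomputable def jC (m : ℝ) : ℕ → ℝ
  | 0 => 1
  | 2 => m ^ 2 - 1
  | 4 => (m ^ 4 - 1) / 12 + (m ^ 2 - 1) * (m ^ 2 - 4)
  | 6 => (m ^ 6 - 1) / 360 + (m ^ 2 - 1) * (m ^ 4 - 16) / 12 + (m ^ 4 - 1) * (m ^ 2 - 4) / 12
      + (m ^ 2 - 1) * (m ^ 2 - 4) * (m ^ 2 - 9)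
  | _ => 0

theorem habX_isBigO (m : ℤ) (j : ℕ) : habX m j =O[nhds (0 : ℝ)] (fun h => h ^ 2) := by
  have h1 := tay_habX m j
  have h2 : (fun h : ℝ => h ^ 8) =O[nhds (0 : ℝ)] (fun h => h ^ 2) := by
    have : (fun h : ℝ => h ^ 2 * h ^ 6) =O[nhds (0 : ℝ)] (fun h => h ^ 2 * 1) :=
      (Asymptotics.isBigO_refl _ _).mul (isBigO_one_of_cont (by fun_prop))
    simpa [← pow_add] using this
  have h3 : (fun h : ℝ => h ^ 2 * (habC m j 2 + habC m j 4 * h ^ 2 + habC m j 6 * h ^ 4))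
      =O[nhds (0 : ℝ)] (fun h => h ^ 2 * 1) :=
    (Asymptotics.isBigO_refl _ _).mul (isBigO_one_of_cont (by fun_prop))
  simp only [mul_one] at h3
  refine ((Asymptotics.IsBigO.trans h1 h2).add h3).congr_left fun h => ?_
  simp [Finset.sum_range_succ, habC]
  ring

theorem prod_isBigO (m : ℤ) (k : ℕ) :
    (fun h => ∏ j ∈ Finset.Icc 1 (k + 4), habX m j h) =O[nhds (0 : ℝ)] (fun h => h ^ 8) := by
  induction k with
  | zero =>
    have := (((habX_isBigO m 1).mul (habX_isBigO m 2)).mul (habX_isBigO m 3)).mul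
      (habX_isBigO m 4)
    refine (this.congr_left fun h => ?_).congr_right fun h => by ring
    simp [Finset.prod_Icc_succ_top]
  | succ k ih =>
    have := ih.mul (tay_habX m (k + 1 + 4)).isBigO_one
    simp only [mul_one] at this
    refine this.congr_left fun h => ?_
    exact ((congrArg (fun K => ∏ j ∈ Finset.Icc 1 K, habX m j h)
      (show k + 1 + 4 = (k + 4) + 1 by ring)).trans
      (Finset.prod_Icc_succ_top (by omega) _)).symm

theorem tay_sum (m : ℤ) (k : ℕ) :
    Tay (fun h => ∑ i ∈ Finset.range (k + 4), ∏ j ∈ Finset.Icc 1 i, habX m j h) (jC m) := by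
  induction k with
  | zero =>
    have t1 := tay_habX m 1
    have t2 := t1.mul (tay_habX m 2)
    have t3 := t2.mul (tay_habX m 3)
    refine ((((tay_const 1).add t1).add t2).add t3).congr ?_ ?_
    · intro h
      simp [Finset.sum_range_succ, Finset.prod_Icc_succ_top]
    · intro k hk
      interval_cases k <;> norm_num [habC, jC, Finset.sum_range_succ, -mul_eq_mul_left_iff, -mul_eq_mul_right_iff, -add_right_inj] <;> ring
  | succ k ih =>
    refine (ih.add (tay_zero_of_isBigO (prod_isBigO m k))).congr ?_ ?_
    · intro h
      exact ((congrArg (fun K => ∑ i ∈ Finset.range K, ∏ j ∈ Finset.Icc 1 i, habX m j h)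
        (show k + 1 + 4 = (k + 4) + 1 by ring)).trans (Finset.sum_range_succ _ _)).symm
    · simp

theorem tay_J41 (m : ℤ) (hm : m ≠ 0) : Tay (fun h => J41 (Real.exp h) m) (jC m) := by
  refine (tay_sum m m.natAbs).congr ?_ (fun _ _ => rfl)
  intro h
  unfold J41
  symm
  refine Finset.sum_subset (by intro x; simp; omega) ?_
  intro k _ hk
  have hk' : m.natAbs ≤ k := by simpa using hk
  have hp : 1 ≤ m.natAbs := by omega
  refine Finset.prod_eq_zero (Finset.mem_Icc.2 ⟨hp, hk'⟩) ?_
  rcases Int.natAbs_eq m with h1 | h1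
  · rw [← h1]; ring
  · rw [show ((m.natAbs : ℕ) : ℤ) = -m by omega]; simp

theorem J41_neg (q : ℝ) (m : ℤ) : J41 q (-m) = J41 q m := by
  unfold J41
  simp only [Int.natAbs_neg, neg_neg]
  refine Finset.sum_congr rfl fun k _ => Finset.prod_congr rfl fun j _ => by ring

/-- The (framing-normalized) summand of the cabling formula, an odd function of the color. -/
noncomputable def cabF (m : ℤ) (h : ℝ) : ℝ :=
  Real.exp (13 / 8 * ((m : ℝ) ^ 2 - 1) * h) *
    ((Real.exp ((m : ℝ) / 2 * h) - Real.exp (-((m : ℝ) / 2) * h)) * J41 (Real.exp h) m)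

theorem cabF_neg (m : ℤ) (h : ℝ) : cabF (-m) h = -cabF m h := by
  simp only [cabF, J41_neg]
  push_cast
  rw [neg_sq, neg_div, neg_neg]
  ring

/-- The sum in the cabling formula. -/
noncomputable def cabA (n : ℕ) (h : ℝ) : ℝ := ∑ j ∈ Finset.range n, cabF (4 * j - 2 * n + 3) h

theorem cabA_succ (n : ℕ) (h : ℝ) : cabA (n + 1) h = cabF (2 * n + 1) h - cabA n h := by
  unfold cabA
  rw [Finset.sum_range_succ, ← Finset.sum_range_reflect, add_comm,
    sub_eq_add_neg (cabF (2 * n + 1) h), ← Finset.sum_neg_distrib]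
  congr 1
  · congr 1; push_cast; ring
  · refine Finset.sum_congr rfl fun j hj => ?_
    rw [← cabF_neg]
    congr 1
    have := Finset.mem_range.1 hj
    omega

/-- The claimed Taylor coefficients. -/
noncomputable def pC (n : ℝ) : ℕ → ℝ
  | 0 => 1
  | 2 => 17 - 17 * n ^ 2
  | 3 => -156 + 156 * n ^ 2
  | 4 => 24749 / 12 - 2365 * n ^ 2 + 3631 / 12 * n ^ 4
  | 5 => -31629 + 38662 * n ^ 2 - 7033 * n ^ 4
  | 6 => 203413517 / 360 - 8687953 / 12 * n ^ 2 + 1969367 / 12 * n ^ 4 - 1855937 / 360 * n ^ 6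
  | _ => 0

/-- Taylor coefficients of `e^{mh/2} - e^{-mh/2}`. -/
noncomputable def sC (m : ℝ) : ℕ → ℝ
  | 1 => m
  | 3 => m ^ 3 / 24
  | 5 => m ^ 5 / 1920
  | 7 => m ^ 7 / 322560
  | _ => 0

theorem tay_sinh (m : ℝ) :
    Tay (fun h => Real.exp (m / 2 * h) - Real.exp (-(m / 2) * h)) (sC m) := by
  refine ((tay_exp (m / 2)).sub (tay_exp (-(m / 2)))).congr (fun _ => rfl) ?_
  intro k hk
  interval_cases k <;> simp [sC, Nat.factorial] <;> ring

/-- Convolution of coefficient sequences. -/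
noncomputable def conv (a b : ℕ → ℝ) (k : ℕ) : ℝ := ∑ i ∈ Finset.range (k + 1), a i * b (k - i)

/-- Taylor coefficients of `e^{ch}`. -/
noncomputable def eC (c : ℝ) (k : ℕ) : ℝ := c ^ k / (k.factorial : ℝ)

theorem tay_cabF (m : ℤ) (hm : m ≠ 0) :
    Tay (cabF m) (conv (eC (13 / 8 * ((m : ℝ) ^ 2 - 1))) (conv (sC m) (jC m))) :=
  (tay_exp (13 / 8 * ((m : ℝ) ^ 2 - 1))).mul ((tay_sinh m).mul (tay_J41 m hm))

/-- Taylor coefficients of the sum in the cabling formula. -/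
noncomputable def rC (n : ℝ) : ℕ → ℝ :=
  conv (eC (13 / 2 * (n ^ 2 - 1))) (conv (sC n) (pC n))

set_option maxHeartbeats 4000000 in
theorem key_identity (n : ℝ) (k : ℕ) (hk : k < 8) :
    conv (eC (13 / 8 * ((2 * n + 1) ^ 2 - 1))) (conv (sC (2 * n + 1)) (jC (2 * n + 1))) k
      - rC n k = rC (n + 1) k := by
  interval_cases k <;>
    simp [rC, conv, eC, sC, jC, pC, Finset.sum_range_succ, Nat.factorial] <;> ring

theorem tay_cabA (n : ℕ) : Tay (cabA n) (rC n) := by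
  induction n with
  | zero =>
    refine (tay_const 0).congr ?_ ?_
    · intro h; simp [cabA]
    · intro k hk
      interval_cases k <;>
        simp [rC, conv, eC, sC, pC, Finset.sum_range_succ]
  | succ n ih =>
    refine ((tay_cabF (2 * n + 1) (by omega)).sub ih).congr ?_ ?_
    · intro h; rw [cabA_succ]
    · intro k hk
      have := key_identity n k hk
      push_cast
      exact this

theorem JCable_eq (n : ℕ) (h : ℝ) (hh : h ≠ 0) :
    JCable 13 2 n h = Real.exp (-(13 / 2 * ((n : ℝ) ^ 2 - 1)) * h) * cabA n h /
      (Real.exp ((n : ℝ) / 2 * h) - Real.exp (-((n : ℝ) / 2) * h)) := by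
  have hd : Real.exp (h / 2) - Real.exp (-(h / 2)) ≠ 0 := by
    rw [sub_ne_zero, Ne, Real.exp_eq_exp]
    intro h1; apply hh; linarith
  have key : JtildeCable 13 2 (Real.exp (h / 4)) n =
      Real.exp (-(13 / 2 * ((n : ℝ) ^ 2 - 1)) * h) * cabA n h /
        (Real.exp (h / 2) - Real.exp (-(h / 2))) := by
    unfold JtildeCable cabA
    rw [mul_div_assoc, Finset.sum_div, Int.toNat_natCast]
    congr 1
    · rw [← exp_int_mul_aux]; push_cast; congr 1; ring
    · refine Finset.sum_congr rfl fun j _ => ?_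
      have hm : (2 : ℤ) * (2 * (j : ℤ) - ((n : ℤ) - 1)) + 1 = 4 * j - 2 * n + 3 := by ring
      unfold Jtilde41 cabF
      rw [hm]
      simp only [← exp_int_mul_aux]
      have e1 : ((4 : ℤ) : ℝ) * (h / 4) = h := by push_cast; ring
      have e2 : ((2 : ℤ) : ℝ) * (h / 4) = h / 2 := by push_cast; ring
      have e3 : ((-2 : ℤ) : ℝ) * (h / 4) = -(h / 2) := by push_cast; ring
      rw [e1, e2, e3]
      rw [mul_div_assoc, mul_div_right_comm]
      congr 1
      · congr 1; push_cast; ring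
      · congr 3 <;> · congr 1; push_cast; ring
  rw [JCable, key, JtildeU]
  simp only [← exp_int_mul_aux]
  have e2 : ((2 : ℤ) : ℝ) * (h / 4) = h / 2 := by push_cast; ring
  have e3 : ((-2 : ℤ) : ℝ) * (h / 4) = -(h / 2) := by push_cast; ring
  rw [e2, e3, div_div_div_cancel_right₀ hd]
  congr 3 <;> · push_cast; ring

theorem analytic_J41 (m : ℤ) : AnalyticAt ℝ (fun h => J41 (Real.exp h) m) 0 := by
  unfold J41
  simp only [← exp_int_mul_aux]
  fun_prop

theorem analytic_cabA (n : ℕ) : AnalyticAt ℝ (cabA n) 0 := by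
  unfold cabA cabF
  have := analytic_J41
  fun_prop

theorem analytic_dslope {f : ℝ → ℝ} (hf : AnalyticAt ℝ f 0) : AnalyticAt ℝ (dslope f 0) 0 := by
  obtain ⟨p, hp⟩ := hf
  exact ⟨_, hp.has_fpower_series_dslope_fslope⟩

/-- For `K = C_{(13,2)}(4₁)` and every integer `n ≥ 1`, the function `ℏ ↦ J_{K,n}(e^ℏ)`
(defined for small `ℏ ≠ 0` by the quotient `J̃_{K,n}(e^{ℏ/4})/J̃_{U,n}(e^{ℏ/4})` and extended
real-analytically across `ℏ = 0`) has Taylor expansion at `ℏ = 0` given by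
`1 + (17 − 17n²)ℏ² + (−156 + 156n²)ℏ³ + (24749/12 − 2365n² + (3631/12)n⁴)ℏ⁴
 + (−31629 + 38662n² − 7033n⁴)ℏ⁵
 + (203413517/360 − (8687953/12)n² + (1969367/12)n⁴ − (1855937/360)n⁶)ℏ⁶ + O(ℏ⁷)`. -/
theorem hbar_expansion_cable_13_2 (n : ℤ) (hn : 1 ≤ n) :
    ∃ g : ℝ → ℝ, AnalyticAt ℝ g 0 ∧
      (∀ᶠ h in nhdsWithin (0 : ℝ) {0}ᶜ, g h = JCable 13 2 n h) ∧
      (fun h : ℝ => g h -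
        (1 + (17 - 17 * (n : ℝ) ^ 2) * h ^ 2 + (-156 + 156 * (n : ℝ) ^ 2) * h ^ 3
          + (24749 / 12 - 2365 * (n : ℝ) ^ 2 + 3631 / 12 * (n : ℝ) ^ 4) * h ^ 4
          + (-31629 + 38662 * (n : ℝ) ^ 2 - 7033 * (n : ℝ) ^ 4) * h ^ 5
          + (203413517 / 360 - 8687953 / 12 * (n : ℝ) ^ 2 + 1969367 / 12 * (n : ℝ) ^ 4
            - 1855937 / 360 * (n : ℝ) ^ 6) * h ^ 6))
        =O[nhds (0 : ℝ)] (fun h => h ^ 7) := by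
  obtain ⟨n, rfl⟩ := Int.eq_ofNat_of_zero_le (by omega : 0 ≤ n)
  have hn0 : (n : ℝ) ≠ 0 := by
    have : n ≠ 0 := by omega
    exact_mod_cast this
  set N : ℝ → ℝ := fun h => Real.exp (-(13 / 2 * ((n : ℝ) ^ 2 - 1)) * h) * cabA n h with hN
  set D : ℝ → ℝ := fun h => Real.exp ((n : ℝ) / 2 * h) - Real.exp (-((n : ℝ) / 2) * h) with hD
  have aA := analytic_cabA n
  have aN : AnalyticAt ℝ N 0 := by simp only [hN]; fun_prop
  have aD : AnalyticAt ℝ D 0 := by simp only [hD]; fun_prop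
  have N0 : N 0 = 0 := by
    simp [N, cabA, cabF]
  have D0 : D 0 = 0 := by simp [hD]
  have dD : HasDerivAt D (n : ℝ) 0 := by
    have h1 := (((hasDerivAt_id (0 : ℝ)).const_mul ((n : ℝ) / 2)).exp).sub
      (((hasDerivAt_id (0 : ℝ)).const_mul (-((n : ℝ) / 2))).exp)
    exact h1.congr_deriv (by simp)
  have sD0 : dslope D 0 0 ≠ 0 := by rw [dslope_same, dD.deriv]; exact hn0
  set g : ℝ → ℝ := fun h => dslope N 0 h / dslope D 0 h with hg
  have ag : AnalyticAt ℝ g 0 := (analytic_dslope aN).div (analytic_dslope aD) sD0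
  have sN : ∀ h, N h = h * dslope N 0 h := fun h => by
    have := sub_smul_dslope N 0 h
    simp [N0] at this
    exact this.symm
  have sD : ∀ h, D h = h * dslope D 0 h := fun h => by
    have := sub_smul_dslope D 0 h
    simp [D0] at this
    exact this.symm
  refine ⟨g, ag, ?_, ?_⟩
  · filter_upwards [self_mem_nhdsWithin] with h hh
    have hh' : h ≠ 0 := hh
    rw [JCable_eq n h hh']
    change g h = N h / D h
    rw [sN, sD, mul_div_mul_left _ _ hh']
  · have tP : Tay (fun h => ∑ i ∈ Finset.range 8, pC n i * h ^ i) (pC n) := by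
      unfold Tay
      refine Asymptotics.IsBigO.congr_left ?_ (fun h => (sub_self _).symm)
      exact Asymptotics.isBigO_zero _ _
    have tB := (tay_exp (13 / 2 * ((n : ℝ) ^ 2 - 1))).mul ((tay_sinh n).mul tP)
    have t0 := ((tay_cabA n).sub tB).congr (b := fun _ => 0) (fun _ => rfl)
      (fun k _ => sub_eq_zero.2 rfl)
    unfold Tay at t0
    simp only [zero_mul, Finset.sum_const_zero, sub_zero] at t0
    have t1 := (isBigO_one_of_cont
      (f := fun h => Real.exp (-(13 / 2 * ((n : ℝ) ^ 2 - 1)) * h)) (by fun_prop)).mul t0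
    have cD := (analytic_dslope aD).continuousAt
    have t2 : (fun h => (dslope D 0 h)⁻¹) =O[nhds (0 : ℝ)] (fun _ => (1 : ℝ)) :=
      (cD.inv₀ sD0).tendsto.isBigO_one ℝ
    have t3 := t2.mul t1
    simp only [one_mul] at t3
    -- now `h * (g h - P h) = O(h^8)`
    have t4 : (fun h => h * (g h - ∑ i ∈ Finset.range 8, pC n i * h ^ i))
        =O[nhds (0 : ℝ)] (fun h => h * h ^ 7) := by
      refine (t3.congr' ?_ (Filter.Eventually.of_forall fun h => by ring))
      filter_upwards [cD.eventually_ne sD0] with h hne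
      have eE : Real.exp (-(13 / 2 * ((n : ℝ) ^ 2 - 1)) * h) *
          Real.exp (13 / 2 * ((n : ℝ) ^ 2 - 1) * h) = 1 := by
        rw [← Real.exp_add]; simp
      have e1 : Real.exp (-(13 / 2 * ((n : ℝ) ^ 2 - 1)) * h) * cabA n h = h * dslope N 0 h := sN h
      have e2 : Real.exp ((n : ℝ) / 2 * h) - Real.exp (-((n : ℝ) / 2) * h) = h * dslope D 0 h :=
        sD h
      rw [mul_sub, ← mul_assoc (Real.exp (-(13 / 2 * ((n : ℝ) ^ 2 - 1)) * h)), eE, e1, e2]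
      have e3 : g h = dslope N 0 h / dslope D 0 h := rfl
      rw [e3]
      clear_value N D g
      field_simp
    have t5 : (fun h => g h - ∑ i ∈ Finset.range 8, pC n i * h ^ i)
        =O[nhds (0 : ℝ)] (fun h => h ^ 7) := by
      rw [Asymptotics.isBigO_iff] at t4 ⊢
      obtain ⟨c, hc⟩ := t4
      have hcont : ContinuousAt (fun h => g h - ∑ i ∈ Finset.range 8, pC n i * h ^ i) 0 :=
        ag.continuousAt.sub (by fun_prop)
      have hne : ∀ᶠ h in nhdsWithin (0 : ℝ) {0}ᶜ,
          ‖g h - ∑ i ∈ Finset.range 8, pC n i * h ^ i‖ ≤ c * ‖h ^ 7‖ := by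
        filter_upwards [self_mem_nhdsWithin, nhdsWithin_le_nhds hc] with h hh hle
        have hpos : 0 < ‖h‖ := norm_pos_iff.2 hh
        rw [norm_mul, norm_mul] at hle
        refine le_of_mul_le_mul_left ?_ hpos
        linarith
      have hc2 : ContinuousAt (fun h : ℝ => c * ‖h ^ 7‖) 0 := by fun_prop
      have h0 : ‖g 0 - ∑ i ∈ Finset.range 8, pC n i * (0 : ℝ) ^ i‖ ≤ c * ‖(0 : ℝ) ^ 7‖ :=
        le_of_tendsto_of_tendsto (hcont.norm.tendsto.mono_left nhdsWithin_le_nhds)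
          (hc2.tendsto.mono_left nhdsWithin_le_nhds) hne
      refine ⟨c, ?_⟩
      filter_upwards [eventually_nhdsWithin_iff.1 hne] with h hh
      by_cases hz : h = 0
      · rw [hz]; exact h0
      · exact hh hz
    refine t5.congr_left fun h => ?_
    simp [Finset.sum_range_succ, pC]
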